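/- arXiv:2504.21455 — 3 statements merged into one kernel-verified Lean document; each statement's English description precedes it below -/
import Mathlib

section
/- For all real numbers r, s, t with 0 ≤ r, 0 ≤ s, r + s ≤ t and r < t, one has −1 ≤ log⁺(r+s) − ( ((t−(r+s))/(t−r))·log⁺ r + (s/(t−r))·log⁺ t ) ≤ 1 + log⁺( min(s, t−r−s) ). -/
open Real

/-- `log⁺ x = log (max x 1)`. -/
noncomputable def logPlus (x : ℝ) : ℝ := Real.log (max x 1)

/-! On `[0, ∞)` the function `log⁺` lies within `log 2` below the concave function `log (1 + ·)`, so
it satisfies Jensen's inequality up to `log 2`: this is the lower bound. For the upper bound, put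
`a = (t - (r + s)) / (t - r)`. Replacing `log⁺ t` by the smaller `log⁺ (r + s)` leaves
`a * (log⁺ (r + s) - log⁺ r) ≤ a * log (1 + s)`, and by concavity this is at most `log (1 + a * s)`,
where `a * s ≤ min s (t - r - s)`. -/

lemma logPlus_mono : Monotone logPlus := fun x y hxy ↦
  log_le_log (by positivity) (max_le_max_right 1 hxy)

lemma logPlus_le_log_one_add {x : ℝ} (hx : 0 ≤ x) : logPlus x ≤ log (1 + x) :=
  log_le_log (by positivity) (max_le (by linarith) (by linarith))

lemma log_one_add_le_log_two_add_logPlus {x : ℝ} (hx : -1 < x) :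
    log (1 + x) ≤ log 2 + logPlus x := by
  rw [logPlus, ← log_mul (by positivity) (by positivity)]
  exact log_le_log (by linarith) (by linarith [le_max_left x 1, le_max_right x 1])

lemma logPlus_add_le {x s : ℝ} (hs : 0 ≤ s) : logPlus (x + s) ≤ logPlus x + log (1 + s) := by
  have max_add_le : max (x + s) 1 ≤ max x 1 * (1 + s) := by
    have hx : x ≤ max x 1 := le_max_left x 1
    have h1 : 1 ≤ max x 1 := le_max_right x 1
    exact max_le (by nlinarith) (by nlinarith)
  rw [logPlus, logPlus, ← log_mul (by positivity) (by positivity)]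
  exact log_le_log (by positivity) max_add_le

lemma concaveOn_log_one_add : ConcaveOn ℝ (Set.Ioi (-1)) fun x : ℝ ↦ log (1 + x) := by
  simpa [Function.comp_def] using strictConcaveOn_log_Ioi.concaveOn.translate_right 1

lemma mul_log_one_add_le {a x : ℝ} (ha : 0 ≤ a) (ha1 : a ≤ 1) (hx : -1 < x) :
    a * log (1 + x) ≤ log (1 + a * x) := by
  simpa using concaveOn_log_one_add.2 hx (y := 0) (by simp) ha (sub_nonneg.2 ha1) (by ring)

section ConvexCombination

variable {a b x y : ℝ}

lemma convexComb_logPlus_le (hx : 0 ≤ x) (hy : 0 ≤ y) (ha : 0 ≤ a) (hb : 0 ≤ b)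
    (hab : a + b = 1) :
    a * logPlus x + b * logPlus y ≤ log 2 + logPlus (a * x + b * y) := by
  have hxy : 0 ≤ a * x + b * y := by positivity
  calc a * logPlus x + b * logPlus y
      ≤ a * log (1 + x) + b * log (1 + y) := by
        gcongr <;> exact logPlus_le_log_one_add ‹_›
    _ ≤ log (1 + (a * x + b * y)) :=
        concaveOn_log_one_add.2 (neg_one_lt_zero.trans_le hx) (neg_one_lt_zero.trans_le hy)
          ha hb hab
    _ ≤ log 2 + logPlus (a * x + b * y) :=
        log_one_add_le_log_two_add_logPlus (neg_one_lt_zero.trans_le hxy)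

lemma logPlus_convexComb_le (hxy : x ≤ y) (ha : 0 ≤ a) (hb : 0 ≤ b) (hab : a + b = 1) :
    logPlus (a * x + b * y) ≤
      a * logPlus x + b * logPlus y + (log 2 + logPlus (a * (b * (y - x)))) := by
  have hd : 0 ≤ b * (y - x) := mul_nonneg hb (sub_nonneg.2 hxy)
  have from_left : a * x + b * y = x + b * (y - x) := by linear_combination x * hab
  have le_right : a * x + b * y ≤ y := by
    linear_combination mul_le_mul_of_nonneg_left hxy ha + y * hab
  calc logPlus (a * x + b * y)
      = a * logPlus (x + b * (y - x)) + b * logPlus (a * x + b * y) := by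
        rw [← from_left, ← add_mul, hab, one_mul]
    _ ≤ a * (logPlus x + log (1 + b * (y - x))) + b * logPlus y := by
        gcongr
        · exact logPlus_add_le hd
        · exact logPlus_mono le_right
    _ = a * logPlus x + b * logPlus y + a * log (1 + b * (y - x)) := by ring
    _ ≤ a * logPlus x + b * logPlus y + log (1 + a * (b * (y - x))) := by
        gcongr
        exact mul_log_one_add_le ha (by linarith) (by linarith)
    _ ≤ a * logPlus x + b * logPlus y + (log 2 + logPlus (a * (b * (y - x)))) := by
        gcongr
        exact log_one_add_le_log_two_add_logPlus (neg_one_lt_zero.trans_le (by positivity))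

end ConvexCombination

theorem logPlus_interpolation_general (r s t : ℝ) (hr : 0 ≤ r) (hs : 0 ≤ s)
    (hrst : r + s ≤ t) (hrt : r < t) :
    -log 2 ≤ logPlus (r + s) -
        ((t - (r + s)) / (t - r) * logPlus r + s / (t - r) * logPlus t) ∧
    logPlus (r + s) -
        ((t - (r + s)) / (t - r) * logPlus r + s / (t - r) * logPlus t) ≤
      log 2 + logPlus (min s (t - r - s)) := by
  have hd : 0 < t - r := sub_pos.2 hrt
  set a := (t - (r + s)) / (t - r)
  set b := s / (t - r)
  have ha : 0 ≤ a := div_nonneg (sub_nonneg.2 hrst) hd.le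
  have hb : 0 ≤ b := div_nonneg hs hd.le
  have had : a * (t - r) = t - (r + s) := div_mul_cancel₀ _ hd.ne'
  have hbd : b * (t - r) = s := div_mul_cancel₀ _ hd.ne'
  have hab : a + b = 1 := mul_right_cancel₀ hd.ne' (by linear_combination had + hbd)
  have hcomb : a * r + b * t = r + s := by linear_combination r * hab + hbd
  have lower := convexComb_logPlus_le hr (hr.trans hrt.le) ha hb hab
  have upper := logPlus_convexComb_le hrt.le ha hb hab
  have mul_le_min : a * s ≤ min s (t - r - s) := by
    refine le_min (mul_le_of_le_one_left hs (by linarith)) ?_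
    calc a * s = b * (t - r - s) := by linear_combination b * had - a * hbd
      _ ≤ t - r - s := mul_le_of_le_one_left (by linarith) (by linarith)
  rw [hcomb] at lower upper
  rw [hbd] at upper
  constructor <;> linarith [logPlus_mono mul_le_min]

/-- Elementary interpolation inequality for the logarithmic barrier curve
(Lemma 2.10 of the paper / Lemma 3.3 of Cortines–Hartung–Louidor). -/
theorem logPlus_interpolation (r s t : ℝ) (hr : 0 ≤ r) (hs : 0 ≤ s)
    (hrst : r + s ≤ t) (hrt : r < t) :
    -1 ≤ logPlus (r + s) -
        ((t - (r + s)) / (t - r) * logPlus r + s / (t - r) * logPlus t) ∧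
    logPlus (r + s) -
        ((t - (r + s)) / (t - r) * logPlus r + s / (t - r) * logPlus t) ≤
      1 + logPlus (min s (t - r - s)) := by
  obtain ⟨lower, upper⟩ := logPlus_interpolation_general r s t hr hs hrst hrt
  constructor <;> linarith [log_two_lt_d9]
end

section
/- For all λ > 0 and ρ > 0, the function z ↦ (1 − e^{−λz} − λz·1_{z≤ρ})·z^{−2} is absolutely integrable on (0,∞) with respect to Lebesgue measure, and ∫₀^∞ (1 − e^{−λz} − λz·1_{z≤ρ}) z^{−2} dz = −λ log λ − (log ρ − 1 + γ)·λ, where γ denotes the Euler–Mascheroni constant. -/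
open MeasureTheory Real Set

/-!
The substitution `t = λz` reduces the claim to `λ = 1`, with cutoff `r = λρ`. There, integration by
parts turns `1 / t ^ 2` into `log t`: with `P t = e⁻ᵗ log t - (1 - e⁻ᵗ) / t`, the functions
`P - log` and `P` are primitives of the integrand minus `e⁻ᵗ log t` on `(0, r]` and on `(r, ∞)`.
The boundary terms at `r` differ by `log r`, those at `0` and `∞` contribute `1` and `0`, and what
remains is `∫ e⁻ᵗ log t dt`, which is the derivative `-γ` of the Gamma function at `1`.
-/

section LogMoment

open Filter Topology

theorem hasDerivAt_Gamma_integral {s : ℝ} (hs : 0 < s) :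
    HasDerivAt Gamma (∫ t in Ioi (0 : ℝ), t ^ (s - 1) * (log t * exp (-t))) s := by
  have hGamma : Complex.Gamma =ᶠ[𝓝 (s : ℂ)] Complex.GammaIntegral := by
    filter_upwards [(isOpen_lt continuous_const Complex.continuous_re).mem_nhds
      (show (0 : ℝ) < (s : ℂ).re from hs)] with w hw
    exact Complex.Gamma_eq_integral hw
  have hderiv := ((Complex.hasDerivAt_GammaIntegral (s := s) hs).congr_of_eventuallyEq
    hGamma).real_of_complex
  have hint : ∫ t in Ioi (0 : ℝ), (t : ℂ) ^ ((s : ℂ) - 1) * (log t * exp (-t)) =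
      ((∫ t in Ioi (0 : ℝ), t ^ (s - 1) * (log t * exp (-t)) : ℝ) : ℂ) := by
    rw [← integral_complex_ofReal]
    refine setIntegral_congr_fun measurableSet_Ioi fun t ht ↦ ?_
    push_cast [Complex.ofReal_cpow (le_of_lt ht)]
    rfl
  rwa [hint, Complex.ofReal_re] at hderiv

theorem integral_log_mul_exp_neg_Ioi :
    ∫ t in Ioi (0 : ℝ), log t * exp (-t) = -eulerMascheroniConstant := by
  have hderiv := (hasDerivAt_Gamma_integral one_pos).unique hasDerivAt_Gamma_one
  simpa only [sub_self, rpow_zero, one_mul] using hderiv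

theorem integrableOn_log_mul_exp_neg_Ioi :
    IntegrableOn (fun t : ℝ ↦ log t * exp (-t)) (Ioi 0) := by
  -- A non-integrable function would have Bochner integral `0`, but `γ ≠ 0`.
  refine .of_integral_ne_zero ?_
  rw [integral_log_mul_exp_neg_Ioi]
  linarith [one_half_lt_eulerMascheroniConstant]

end LogMoment

section Integrability

theorem exp_neg_le_one_sub_add_sq_div_two {x : ℝ} (hx : 0 ≤ x) :
    exp (-x) ≤ 1 - x + x ^ 2 / 2 := by
  rw [exp_neg, inv_le_iff_one_le_mul₀ (exp_pos x)]
  calc (1 : ℝ) ≤ 1 + x ^ 4 / 4 := by linarith [pow_nonneg hx 4]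
    _ = (1 - x + x ^ 2 / 2) * (1 + x + x ^ 2 / 2) := by ring
    _ ≤ (1 - x + x ^ 2 / 2) * exp x := by
      gcongr
      · nlinarith [sq_nonneg (x - 1)]
      · exact quadratic_le_exp_of_nonneg hx

theorem integrableOn_one_sub_exp_neg_sub_div_sq_Ioc (r : ℝ) :
    IntegrableOn (fun t : ℝ ↦ (1 - exp (-t) - t) / t ^ 2) (Ioc 0 r) := by
  refine Measure.integrableOn_of_bounded (M := 1 / 2) measure_Ioc_lt_top.ne
    (Measurable.aestronglyMeasurable (by fun_prop)) ?_
  filter_upwards [ae_restrict_mem measurableSet_Ioc] with t ht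
  have hlower := one_sub_le_exp_neg t
  have hupper := exp_neg_le_one_sub_add_sq_div_two ht.1.le
  rw [norm_div, norm_pow, norm_eq_abs t, sq_abs, norm_eq_abs,
    div_le_iff₀ (pow_pos ht.1 2), abs_le]
  constructor <;> linarith

theorem integrableOn_one_sub_exp_neg_div_sq_Ioi {r : ℝ} (hr : 0 < r) :
    IntegrableOn (fun t : ℝ ↦ (1 - exp (-t)) / t ^ 2) (Ioi r) := by
  refine (integrableOn_Ioi_rpow_of_lt (a := -2) (by norm_num) hr).mono'
    (Measurable.aestronglyMeasurable (by fun_prop)) ?_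
  filter_upwards [ae_restrict_mem measurableSet_Ioi] with t ht
  have ht0 : 0 < t := hr.trans ht
  have hexp : exp (-t) ≤ 1 := exp_le_one_iff.2 (by linarith)
  rw [rpow_neg ht0.le, rpow_two, ← one_div, norm_div, norm_pow, norm_eq_abs t, sq_abs,
    norm_of_nonneg (by linarith)]
  gcongr
  linarith [exp_pos (-t)]

end Integrability

section Primitive

open Filter Topology

/-- The primitive of `(1 - e⁻ᵗ) / t ^ 2 - e⁻ᵗ log t` on `(0, ∞)` obtained by integrating
`(1 - e⁻ᵗ) / t ^ 2` by parts twice. -/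
noncomputable def logExpPrimitive (t : ℝ) : ℝ := exp (-t) * log t - (1 - exp (-t)) / t

theorem hasDerivAt_logExpPrimitive {t : ℝ} (ht : t ≠ 0) :
    HasDerivAt logExpPrimitive ((1 - exp (-t)) / t ^ 2 - log t * exp (-t)) t := by
  have hexp : HasDerivAt (fun t : ℝ ↦ exp (-t)) (-exp (-t)) t := by
    simpa using (hasDerivAt_neg t).exp
  refine ((hexp.mul (hasDerivAt_log ht)).sub
    ((hexp.const_sub 1).div (hasDerivAt_id t) ht)).congr_deriv ?_
  simp only [id]
  field_simp
  ring

theorem hasDerivAt_logExpPrimitive_sub_log {t : ℝ} (ht : t ≠ 0) :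
    HasDerivAt (fun t ↦ logExpPrimitive t - log t)
      ((1 - exp (-t) - t) / t ^ 2 - log t * exp (-t)) t := by
  refine ((hasDerivAt_logExpPrimitive ht).sub (hasDerivAt_log ht)).congr_deriv ?_
  field_simp
  ring

theorem tendsto_one_sub_exp_neg_div_nhdsNE_zero :
    Tendsto (fun t : ℝ ↦ (1 - exp (-t)) / t) (𝓝[≠] 0) (𝓝 1) := by
  have hderiv : HasDerivAt (fun t : ℝ ↦ 1 - exp (-t)) 1 0 := by
    simpa using (hasDerivAt_neg (0 : ℝ)).exp.const_sub 1
  simpa [div_eq_inv_mul] using hderiv.tendsto_slope_zero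

theorem tendsto_logExpPrimitive_sub_log_nhdsGT_zero :
    Tendsto (fun t ↦ logExpPrimitive t - log t) (𝓝[>] 0) (𝓝 (-1)) := by
  have hslope : Tendsto (fun t : ℝ ↦ (1 - exp (-t)) / t) (𝓝[>] 0) (𝓝 1) :=
    tendsto_one_sub_exp_neg_div_nhdsNE_zero.mono_left (nhdsGT_le_nhdsNE 0)
  have hlog : Tendsto (fun t : ℝ ↦ log t * t) (𝓝[>] 0) (𝓝 0) := by
    simpa only [rpow_one] using tendsto_log_mul_rpow_nhdsGT_zero one_pos
  have hsum := (hslope.mul hlog).neg.sub hslope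
  rw [mul_zero, neg_zero, zero_sub] at hsum
  refine hsum.congr' ?_
  filter_upwards [self_mem_nhdsWithin] with t (ht : 0 < t)
  rw [logExpPrimitive]
  field_simp
  ring

theorem tendsto_logExpPrimitive_atTop : Tendsto logExpPrimitive atTop (𝓝 0) := by
  have hexp : Tendsto (fun t : ℝ ↦ exp (-t)) atTop (𝓝 0) := tendsto_exp_neg_atTop_nhds_zero
  have hlog : Tendsto (fun t : ℝ ↦ t ^ 1 * exp (-t) * (log t / t)) atTop (𝓝 0) := by
    simpa using (tendsto_pow_mul_exp_neg_atTop_nhds_zero 1).mul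
      isLittleO_log_id_atTop.tendsto_div_nhds_zero
  have hdiff := hlog.sub ((hexp.const_sub 1).div_atTop tendsto_id)
  rw [sub_zero] at hdiff
  refine hdiff.congr' ?_
  filter_upwards [eventually_ne_atTop 0] with t ht
  simp only [logExpPrimitive, id]
  field_simp

theorem integral_one_sub_exp_neg_sub_div_sq_sub_log_mul_exp_neg_Ioc {r : ℝ} (hr : 0 < r) :
    ∫ t in Ioc 0 r, ((1 - exp (-t) - t) / t ^ 2 - log t * exp (-t)) =
      logExpPrimitive r - log r + 1 := by
  have hint := (integrableOn_one_sub_exp_neg_sub_div_sq_Ioc r).sub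
    (integrableOn_log_mul_exp_neg_Ioi.mono_set Ioc_subset_Ioi_self)
  rw [← intervalIntegral.integral_of_le hr.le,
    intervalIntegral.integral_eq_sub_of_hasDerivAt_of_tendsto hr
      (fun t ht ↦ hasDerivAt_logExpPrimitive_sub_log ht.1.ne')
      ((intervalIntegrable_iff_integrableOn_Ioc_of_le hr.le).2 hint)
      tendsto_logExpPrimitive_sub_log_nhdsGT_zero
      ((hasDerivAt_logExpPrimitive_sub_log hr.ne').continuousAt.tendsto.mono_left
        nhdsWithin_le_nhds),
    sub_neg_eq_add]

theorem integral_one_sub_exp_neg_div_sq_sub_log_mul_exp_neg_Ioi {r : ℝ} (hr : 0 < r) :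
    ∫ t in Ioi r, ((1 - exp (-t)) / t ^ 2 - log t * exp (-t)) = -logExpPrimitive r := by
  have hint := (integrableOn_one_sub_exp_neg_div_sq_Ioi hr).sub
    (integrableOn_log_mul_exp_neg_Ioi.mono_set (Ioi_subset_Ioi hr.le))
  rw [integral_Ioi_of_hasDerivAt_of_tendsto'
    (fun t ht ↦ hasDerivAt_logExpPrimitive (hr.trans_le ht).ne') hint
    tendsto_logExpPrimitive_atTop, zero_sub]

end Primitive

section Compensated

/-- The integrand of the Laplace exponent at `λ = 1` of the spectrally positive stable-1 law, the
jumps of size at most `r` being compensated. -/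
noncomputable def stableOneIntegrand (r t : ℝ) : ℝ :=
  (1 - exp (-t) - if t ≤ r then t else 0) / t ^ 2

theorem stableOneIntegrand_of_le {r t : ℝ} (h : t ≤ r) :
    stableOneIntegrand r t = (1 - exp (-t) - t) / t ^ 2 := by
  rw [stableOneIntegrand, if_pos h]

theorem stableOneIntegrand_of_lt {r t : ℝ} (h : r < t) :
    stableOneIntegrand r t = (1 - exp (-t)) / t ^ 2 := by
  rw [stableOneIntegrand, if_neg h.not_ge, sub_zero]

theorem sq_mul_stableOneIntegrand_mul {l : ℝ} (hl : 0 < l) (ρ z : ℝ) :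
    l ^ 2 * stableOneIntegrand (l * ρ) (l * z) =
      (1 - exp (-(l * z)) - if z ≤ ρ then l * z else 0) * z ^ (-2 : ℝ) := by
  have hrpow : z ^ (-2 : ℝ) = (z ^ 2)⁻¹ := mod_cast rpow_intCast z (-2)
  rw [stableOneIntegrand, hrpow, mul_pow]
  simp only [mul_le_mul_iff_right₀ hl]
  field_simp

theorem integrableOn_stableOneIntegrand {r : ℝ} (hr : 0 < r) :
    IntegrableOn (stableOneIntegrand r) (Ioi 0) := by
  rw [← Ioc_union_Ioi_eq_Ioi hr.le]
  exact ((integrableOn_one_sub_exp_neg_sub_div_sq_Ioc r).congr_fun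
      (fun t ht ↦ (stableOneIntegrand_of_le ht.2).symm) measurableSet_Ioc).union
    ((integrableOn_one_sub_exp_neg_div_sq_Ioi hr).congr_fun
      (fun t ht ↦ (stableOneIntegrand_of_lt ht).symm) measurableSet_Ioi)

theorem integral_stableOneIntegrand_sub_log_mul_exp_neg {r : ℝ} (hr : 0 < r) :
    ∫ t in Ioi (0 : ℝ), (stableOneIntegrand r t - log t * exp (-t)) = 1 - log r := by
  have hint : IntegrableOn (fun t ↦ stableOneIntegrand r t - log t * exp (-t)) (Ioi 0) :=
    (integrableOn_stableOneIntegrand hr).sub integrableOn_log_mul_exp_neg_Ioi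
  have hsmall : ∫ t in Ioc 0 r, (stableOneIntegrand r t - log t * exp (-t)) =
      logExpPrimitive r - log r + 1 := by
    rw [← integral_one_sub_exp_neg_sub_div_sq_sub_log_mul_exp_neg_Ioc hr]
    exact setIntegral_congr_fun measurableSet_Ioc fun t ht ↦ by
      simp only [stableOneIntegrand_of_le ht.2]
  have hlarge : ∫ t in Ioi r, (stableOneIntegrand r t - log t * exp (-t)) =
      -logExpPrimitive r := by
    rw [← integral_one_sub_exp_neg_div_sq_sub_log_mul_exp_neg_Ioi hr]
    exact setIntegral_congr_fun measurableSet_Ioi fun t ht ↦ by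
      simp only [stableOneIntegrand_of_lt ht]
  rw [← Ioc_union_Ioi_eq_Ioi hr.le, setIntegral_union (Ioc_disjoint_Ioi le_rfl) measurableSet_Ioi
    (hint.mono_set Ioc_subset_Ioi_self) (hint.mono_set (Ioi_subset_Ioi hr.le)), hsmall, hlarge]
  ring

theorem integral_stableOneIntegrand {r : ℝ} (hr : 0 < r) :
    ∫ t in Ioi (0 : ℝ), stableOneIntegrand r t = 1 - log r - eulerMascheroniConstant := by
  have hdiff := integral_stableOneIntegrand_sub_log_mul_exp_neg hr
  rw [integral_sub (integrableOn_stableOneIntegrand hr) integrableOn_log_mul_exp_neg_Ioi,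
    integral_log_mul_exp_neg_Ioi] at hdiff
  linarith

end Compensated

/-- The Laplace exponent computation for the spectrally positive stable-1 law:
for `λ, ρ > 0`, the function `z ↦ (1 − e^{−λz} − λz·1_{z≤ρ})·z^{−2}` is integrable on
`(0,∞)` and its integral equals `−λ log λ − (log ρ − 1 + γ)·λ`, where `γ` is the
Euler–Mascheroni constant. -/
theorem stable_one_laplace_exponent (l ρ : ℝ) (hl : 0 < l) (hρ : 0 < ρ) :
    IntegrableOn
      (fun z : ℝ => (1 - Real.exp (-(l * z)) - (if z ≤ ρ then l * z else 0)) * z ^ (-2 : ℝ))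
      (Ioi 0) volume ∧
    ∫ z in Ioi (0 : ℝ),
        (1 - Real.exp (-(l * z)) - (if z ≤ ρ then l * z else 0)) * z ^ (-2 : ℝ)
      = -(l * Real.log l) - (Real.log ρ - 1 + Real.eulerMascheroniConstant) * l := by
  have hr : 0 < l * ρ := mul_pos hl hρ
  simp only [← sq_mul_stableOneIntegrand_mul hl]
  constructor
  · refine ((integrableOn_Ioi_comp_mul_left_iff (stableOneIntegrand (l * ρ)) 0 hl).2 ?_).const_mul _
    rw [mul_zero]
    exact integrableOn_stableOneIntegrand hr
  · rw [integral_const_mul, integral_comp_mul_left_Ioi (stableOneIntegrand (l * ρ)) 0 hl, mul_zero,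
      integral_stableOneIntegrand hr, log_mul hl.ne' hρ.ne', smul_eq_mul]
    field_simp
    ring
end

section
/- For every ρ > 0, the function I : (0,∞) → ℝ defined by I(λ) := ∫₀^∞ (1 − e^{−λz} − λz·1_{z≤ρ}) z^{−2} dz is twice differentiable on (0,∞), and I''(λ) = −1/λ for every λ > 0. -/
/-!
With the Lévy measure `ν(dz) = z⁻² dz` on `(0, ∞)`, the function `I` is the Laplace exponent
`l ↦ ∫ (1 - e^{-lz} - lz 1_{z ≤ ρ}) ν(dz)`, and for every Lévy measure two differentiations under
the integral sign give `-∫ z² e^{-lz} ν(dz)`; for the given `ν` this is `-∫ e^{-lz} dz = -1 / l`.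
For fixed `z`, both derivatives of the integrand are monotone in `l`, so near each point they are
dominated by their values at the two endpoints of an interval. Hence only integrability at each
fixed `l` has to be checked, and there the integrand and its derivatives are `O(z²)` at `0` and
bounded at `∞`.
-/

open MeasureTheory Real Set

/-- The integral `I(λ) = ∫₀^∞ (1 − e^{−λz} − λz·1_{z≤ρ}) z^{−2} dz`. -/
noncomputable def stableIntegral (ρ : ℝ) (l : ℝ) : ℝ :=
  ∫ z in Ioi (0 : ℝ),
    (1 - Real.exp (-(l * z)) - (if z ≤ ρ then l * z else 0)) * z ^ (-2 : ℝ)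

section MonotoneDerivative

open scoped Topology

variable {α : Type*} [MeasurableSpace α] {μ : Measure α} {F F' : ℝ → α → ℝ} {s : Set ℝ} {x₀ : ℝ}

theorem hasDerivAt_integral_of_monotoneOn_deriv (hs : s ∈ 𝓝 x₀)
    (hF : ∀ x ∈ s, Integrable (F x) μ) (hF' : ∀ x ∈ s, Integrable (F' x) μ)
    (hderiv : ∀ᵐ a ∂μ, ∀ x ∈ s, HasDerivAt (F · a) (F' x a) x)
    (hmono : ∀ᵐ a ∂μ, MonotoneOn (F' · a) s) :
    HasDerivAt (fun x ↦ ∫ a, F x a ∂μ) (∫ a, F' x₀ a ∂μ) x₀ := by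
  obtain ⟨b, c, hx₀, hbc, hsub⟩ := exists_Icc_mem_subset_of_mem_nhds hs
  have hb : b ∈ s := hsub (left_mem_Icc.2 (hx₀.1.trans hx₀.2))
  have hc : c ∈ s := hsub (right_mem_Icc.2 (hx₀.1.trans hx₀.2))
  have hbound : ∀ᵐ a ∂μ, ∀ x ∈ Icc b c, ‖F' x a‖ ≤ max |F' b a| |F' c a| := by
    filter_upwards [hmono] with a ha x hx
    exact abs_le_max_abs_abs (ha hb (hsub hx) hx.1) (ha (hsub hx) hc hx.2)
  have hderiv' : ∀ᵐ a ∂μ, ∀ x ∈ Icc b c, HasDerivAt (F · a) (F' x a) x :=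
    hderiv.mono fun a ha x hx ↦ ha x (hsub hx)
  exact (hasDerivAt_integral_of_dominated_loc_of_deriv_le hbc
    (Filter.mem_of_superset hs fun x hx ↦ (hF x hx).aestronglyMeasurable)
    (hF x₀ (hsub hx₀)) (hF' x₀ (hsub hx₀)).aestronglyMeasurable hbound
    ((hF' b hb).abs.sup (hF' c hc).abs) hderiv').2

theorem hasDerivAt_integral_of_antitoneOn_deriv (hs : s ∈ 𝓝 x₀)
    (hF : ∀ x ∈ s, Integrable (F x) μ) (hF' : ∀ x ∈ s, Integrable (F' x) μ)
    (hderiv : ∀ᵐ a ∂μ, ∀ x ∈ s, HasDerivAt (F · a) (F' x a) x)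
    (hanti : ∀ᵐ a ∂μ, AntitoneOn (F' · a) s) :
    HasDerivAt (fun x ↦ ∫ a, F x a ∂μ) (∫ a, F' x₀ a ∂μ) x₀ := by
  have hneg : HasDerivAt (fun x ↦ ∫ a, -F x a ∂μ) (∫ a, -F' x₀ a ∂μ) x₀ :=
    hasDerivAt_integral_of_monotoneOn_deriv hs (fun x hx ↦ (hF x hx).neg)
      (fun x hx ↦ (hF' x hx).neg) (hderiv.mono fun a ha x hx ↦ (ha x hx).fun_neg)
      (hanti.mono fun a ha ↦ ha.neg)
  simpa only [integral_neg, neg_neg] using hneg.fun_neg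

end MonotoneDerivative

theorem abs_one_sub_exp_neg_sub_le_sq {y : ℝ} (hy : 0 ≤ y) : |1 - exp (-y) - y| ≤ y ^ 2 := by
  have hlower : 1 - y ≤ exp (-y) := one_sub_le_exp_neg y
  have hupper : exp (-y) ≤ 1 - y + y ^ 2 := by
    rcases le_total y 1 with hy1 | hy1
    · have habs : |-y| ≤ 1 := by rwa [abs_neg, abs_of_nonneg hy]
      linarith [(abs_le.1 (abs_exp_sub_one_sub_id_le habs)).2, neg_sq y]
    · have : exp (-y) ≤ 1 := exp_le_one_iff.2 (neg_nonpos.2 hy)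
      nlinarith
  rw [abs_le]
  constructor <;> linarith [sq_nonneg y]

/-- The integrand `1 - e^{-lz} - lz 1_{z ≤ ρ}` of the Laplace exponent, in which the jumps of size
at most `ρ` are compensated. -/
noncomputable def compensatedKernel (ρ l z : ℝ) : ℝ :=
  1 - exp (-(l * z)) - if z ≤ ρ then l * z else 0

/-- The derivative `z (e^{-lz} - 1_{z ≤ ρ})` of `compensatedKernel ρ l z` with respect to `l`. -/
noncomputable def compensatedKernelDeriv (ρ l z : ℝ) : ℝ :=
  z * (exp (-(l * z)) - if z ≤ ρ then 1 else 0)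

section Kernel

variable {ρ l z : ℝ}

theorem measurable_compensatedKernel : Measurable (compensatedKernel ρ l) :=
  Measurable.sub (by fun_prop) (Measurable.ite measurableSet_Iic (by fun_prop) measurable_const)

theorem measurable_compensatedKernelDeriv : Measurable (compensatedKernelDeriv ρ l) :=
  measurable_id.mul <| Measurable.sub (by fun_prop)
    (Measurable.ite measurableSet_Iic measurable_const measurable_const)

theorem hasDerivAt_exp_neg_mul (l z : ℝ) :
    HasDerivAt (fun l ↦ exp (-(l * z))) (-(z * exp (-(l * z)))) l := by
  simpa only [mul_neg, mul_comm z] using (hasDerivAt_mul_const z).fun_neg.exp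

theorem hasDerivAt_compensatedKernel (ρ l z : ℝ) :
    HasDerivAt (compensatedKernel ρ · z) (compensatedKernelDeriv ρ l z) l := by
  have hexp := (hasDerivAt_exp_neg_mul l z).const_sub 1
  unfold compensatedKernel compensatedKernelDeriv
  split_ifs
  · exact (hexp.sub (hasDerivAt_mul_const z)).congr_deriv (by ring)
  · exact (hexp.sub_const 0).congr_deriv (by ring)

theorem hasDerivAt_compensatedKernelDeriv (ρ l z : ℝ) :
    HasDerivAt (compensatedKernelDeriv ρ · z) (-(z ^ 2 * exp (-(l * z)))) l :=
  (((hasDerivAt_exp_neg_mul l z).sub_const _).const_mul z).congr_deriv (by ring)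

theorem antitone_compensatedKernelDeriv (hz : 0 ≤ z) :
    Antitone (compensatedKernelDeriv ρ · z) := fun x y hxy ↦ by
  simp only [compensatedKernelDeriv]
  gcongr

theorem abs_compensatedKernel_le_of_le (hl : 0 ≤ l) (hz : 0 ≤ z) (hzρ : z ≤ ρ) :
    |compensatedKernel ρ l z| ≤ l ^ 2 * z ^ 2 := by
  rw [compensatedKernel, if_pos hzρ, ← mul_pow]
  exact abs_one_sub_exp_neg_sub_le_sq (mul_nonneg hl hz)

theorem abs_compensatedKernel_le_of_lt (hl : 0 ≤ l) (hz : 0 ≤ z) (hzρ : ρ < z) :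
    |compensatedKernel ρ l z| ≤ 1 := by
  have hexp : exp (-(l * z)) ≤ 1 := exp_le_one_iff.2 (neg_nonpos.2 (mul_nonneg hl hz))
  rw [compensatedKernel, if_neg hzρ.not_ge, sub_zero, abs_of_nonneg (sub_nonneg.2 hexp)]
  linarith [exp_pos (-(l * z))]

theorem abs_compensatedKernelDeriv_le_of_le (hl : 0 ≤ l) (hz : 0 ≤ z) (hzρ : z ≤ ρ) :
    |compensatedKernelDeriv ρ l z| ≤ l * z ^ 2 := by
  have hexp : exp (-(l * z)) ≤ 1 := exp_le_one_iff.2 (neg_nonpos.2 (mul_nonneg hl hz))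
  rw [compensatedKernelDeriv, if_pos hzρ, abs_mul, abs_of_nonneg hz, abs_sub_comm,
    abs_of_nonneg (sub_nonneg.2 hexp)]
  calc z * (1 - exp (-(l * z))) ≤ z * (l * z) := by
        gcongr
        linarith [one_sub_le_exp_neg (l * z)]
    _ = l * z ^ 2 := by ring

theorem abs_compensatedKernelDeriv_le_of_lt (hl : 0 < l) (hz : 0 ≤ z) (hzρ : ρ < z) :
    |compensatedKernelDeriv ρ l z| ≤ l⁻¹ := by
  have hexp : l * z * exp (-(l * z)) ≤ 1 :=
    (mul_exp_neg_le_exp_neg_one _).trans (exp_le_one_iff.2 (by norm_num))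
  rw [compensatedKernelDeriv, if_neg hzρ.not_ge, sub_zero, abs_of_nonneg (by positivity),
    ← one_div, le_div_iff₀ hl]
  linarith

theorem sq_mul_exp_neg_mul_le (hl : 0 < l) (hz : 0 ≤ z) :
    z ^ 2 * exp (-(l * z)) ≤ 2 / l ^ 2 := by
  have hquad := quadratic_le_exp_of_nonneg (mul_nonneg hl.le hz)
  rw [exp_neg, ← div_eq_mul_inv, div_le_div_iff₀ (exp_pos _) (by positivity)]
  nlinarith [mul_nonneg hl.le hz]

end Kernel

/-- A measure `ν` on `ℝ` is a Lévy measure on `(0, ∞)` if `∫ min(1, z²) ν(dz) < ∞` over `(0, ∞)`;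
its restriction to the rest of `ℝ` is ignored. -/
def IsLevyMeasure (ν : Measure ℝ) : Prop :=
  IntegrableOn (fun z ↦ min 1 (z ^ 2)) (Ioi 0) ν

/-- The Laplace exponent of the pure-jump Lévy process with positive jumps whose Lévy measure is
`ν` and whose jumps of size at most `ρ` are compensated. -/
noncomputable def levyExponent (ν : Measure ℝ) (ρ l : ℝ) : ℝ :=
  ∫ z in Ioi 0, compensatedKernel ρ l z ∂ν

namespace IsLevyMeasure

variable {ν : Measure ℝ} {ρ l : ℝ}

theorem integrableOn_of_abs_le (hν : IsLevyMeasure ν) (hρ : 0 < ρ) {f : ℝ → ℝ} {A B : ℝ}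
    (hf : AEStronglyMeasurable f (ν.restrict (Ioi 0)))
    (hsmall : ∀ z, 0 < z → z ≤ ρ → |f z| ≤ A * z ^ 2) (hlarge : ∀ z, ρ < z → |f z| ≤ B) :
    IntegrableOn f (Ioi 0) ν := by
  set m : ℝ → ℝ := fun z ↦ min 1 (z ^ 2) with hm
  have hsq : ∀ z, 0 < z → z ≤ ρ → z ^ 2 ≤ (1 + ρ ^ 2) * m z := fun z hz hzρ ↦ by
    have : z ^ 2 ≤ ρ ^ 2 := by gcongr
    rcases min_cases 1 (z ^ 2) with h | h <;> simp only [hm, h.1] <;> nlinarith [sq_nonneg z]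
  have hone : ∀ z, ρ < z → 1 ≤ (1 + (ρ ^ 2)⁻¹) * m z := fun z hz ↦ by
    have : 1 ≤ (ρ ^ 2)⁻¹ * z ^ 2 := by
      rw [inv_mul_eq_div, one_le_div (by positivity)]
      gcongr
    have : 0 < (ρ ^ 2)⁻¹ := by positivity
    rcases min_cases 1 (z ^ 2) with h | h <;> simp only [hm, h.1] <;> nlinarith [sq_nonneg z]
  have hm0 : ∀ z, 0 ≤ m z := fun z ↦ le_min zero_le_one (sq_nonneg z)
  refine Integrable.mono' (hν.const_mul (|A| * (1 + ρ ^ 2) + |B| * (1 + (ρ ^ 2)⁻¹))) hf ?_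
  filter_upwards [ae_restrict_mem measurableSet_Ioi] with z hz
  rw [add_mul, mul_assoc, mul_assoc]
  rcases le_or_gt z ρ with hzρ | hzρ
  · calc |f z| ≤ A * z ^ 2 := hsmall z hz hzρ
      _ ≤ |A| * ((1 + ρ ^ 2) * m z) := by
        gcongr
        exacts [le_abs_self A, hsq z hz hzρ]
      _ ≤ _ := le_add_of_nonneg_right (by have := hm0 z; positivity)
  · calc |f z| ≤ B * 1 := (hlarge z hzρ).trans_eq (mul_one B).symm
      _ ≤ |B| * ((1 + (ρ ^ 2)⁻¹) * m z) := by
        gcongr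
        exacts [le_abs_self B, hone z hzρ]
      _ ≤ _ := le_add_of_nonneg_left (by have := hm0 z; positivity)

theorem integrableOn_compensatedKernel (hν : IsLevyMeasure ν) (hρ : 0 < ρ) (hl : 0 ≤ l) :
    IntegrableOn (compensatedKernel ρ l) (Ioi 0) ν :=
  hν.integrableOn_of_abs_le hρ measurable_compensatedKernel.aestronglyMeasurable
    (fun _ hz hzρ ↦ abs_compensatedKernel_le_of_le hl hz.le hzρ)
    (fun _ hzρ ↦ abs_compensatedKernel_le_of_lt hl (hρ.trans hzρ).le hzρ)

theorem integrableOn_compensatedKernelDeriv (hν : IsLevyMeasure ν) (hρ : 0 < ρ) (hl : 0 < l) :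
    IntegrableOn (compensatedKernelDeriv ρ l) (Ioi 0) ν :=
  hν.integrableOn_of_abs_le hρ measurable_compensatedKernelDeriv.aestronglyMeasurable
    (fun _ hz hzρ ↦ abs_compensatedKernelDeriv_le_of_le hl.le hz.le hzρ)
    (fun _ hzρ ↦ abs_compensatedKernelDeriv_le_of_lt hl (hρ.trans hzρ).le hzρ)

theorem integrableOn_sq_mul_exp_neg_mul (hν : IsLevyMeasure ν) (hl : 0 < l) :
    IntegrableOn (fun z ↦ z ^ 2 * exp (-(l * z))) (Ioi 0) ν := by
  refine hν.integrableOn_of_abs_le (A := 1) (B := 2 / l ^ 2) one_pos (by fun_prop) (fun z hz _ ↦ ?_)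
    (fun z hz ↦ ?_)
  · rw [abs_of_nonneg (by positivity), mul_comm]
    gcongr
    exact exp_le_one_iff.2 (neg_nonpos.2 (by positivity))
  · rw [abs_of_nonneg (by positivity)]
    exact sq_mul_exp_neg_mul_le hl (one_pos.trans hz).le

theorem hasDerivAt_levyExponent (hν : IsLevyMeasure ν) (hρ : 0 < ρ) (hl : 0 < l) :
    HasDerivAt (levyExponent ν ρ) (∫ z in Ioi 0, compensatedKernelDeriv ρ l z ∂ν) l := by
  refine hasDerivAt_integral_of_antitoneOn_deriv (Ioi_mem_nhds hl)
    (fun x hx ↦ hν.integrableOn_compensatedKernel hρ (le_of_lt hx))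
    (fun x hx ↦ hν.integrableOn_compensatedKernelDeriv hρ hx)
    (.of_forall fun z x _ ↦ hasDerivAt_compensatedKernel ρ x z) ?_
  filter_upwards [ae_restrict_mem measurableSet_Ioi] with z hz
  exact (antitone_compensatedKernelDeriv (le_of_lt hz)).antitoneOn _

theorem hasDerivAt_deriv_levyExponent (hν : IsLevyMeasure ν) (hρ : 0 < ρ) (hl : 0 < l) :
    HasDerivAt (deriv (levyExponent ν ρ)) (-∫ z in Ioi 0, z ^ 2 * exp (-(l * z)) ∂ν) l := by
  have hderiv : HasDerivAt (fun x ↦ ∫ z in Ioi 0, compensatedKernelDeriv ρ x z ∂ν)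
      (∫ z in Ioi 0, -(z ^ 2 * exp (-(l * z))) ∂ν) l := by
    refine hasDerivAt_integral_of_monotoneOn_deriv (Ioi_mem_nhds hl)
      (fun x hx ↦ hν.integrableOn_compensatedKernelDeriv hρ hx)
      (fun x hx ↦ (hν.integrableOn_sq_mul_exp_neg_mul hx).neg)
      (.of_forall fun z x _ ↦ hasDerivAt_compensatedKernelDeriv ρ x z) ?_
    filter_upwards [ae_restrict_mem measurableSet_Ioi] with z (hz : 0 < z) x _ y _ hxy
    simp only [Pi.neg_apply]
    gcongr
  rw [integral_neg] at hderiv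
  refine hderiv.congr_of_eventuallyEq ?_
  filter_upwards [Ioi_mem_nhds hl] with x hx
  exact (hν.hasDerivAt_levyExponent hρ hx).deriv

end IsLevyMeasure

theorem stableIntegral_second_deriv_general {ν : Measure ℝ} (hν : IsLevyMeasure ν) {ρ : ℝ}
    (hρ : 0 < ρ) :
    DifferentiableOn ℝ (levyExponent ν ρ) (Ioi 0) ∧
    DifferentiableOn ℝ (deriv (levyExponent ν ρ)) (Ioi 0) ∧
    ∀ l : ℝ, 0 < l →
      deriv (deriv (levyExponent ν ρ)) l = -∫ z in Ioi 0, z ^ 2 * exp (-(l * z)) ∂ν :=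
  ⟨fun _ hl ↦ (hν.hasDerivAt_levyExponent hρ hl).differentiableAt.differentiableWithinAt,
    fun _ hl ↦ (hν.hasDerivAt_deriv_levyExponent hρ hl).differentiableAt.differentiableWithinAt,
    fun _ hl ↦ (hν.hasDerivAt_deriv_levyExponent hρ hl).deriv⟩

/-- The Lévy measure `z^{-1-α} dz` of the positive jumps of an `α`-stable process. -/
noncomputable def stableMeasure (α : ℝ) : Measure ℝ :=
  volume.withDensity fun z ↦ ENNReal.ofReal (z ^ (-1 - α))

theorem setIntegral_stableMeasure (α : ℝ) (f : ℝ → ℝ) :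
    ∫ z in Ioi 0, f z ∂stableMeasure α = ∫ z in Ioi 0, f z * z ^ (-1 - α) := by
  rw [stableMeasure, setIntegral_withDensity_eq_setIntegral_toReal_smul (by fun_prop)
    (.of_forall fun _ ↦ ENNReal.ofReal_lt_top) f measurableSet_Ioi]
  refine setIntegral_congr_fun measurableSet_Ioi fun z (hz : 0 < z) ↦ ?_
  simp only [ENNReal.toReal_ofReal (rpow_nonneg hz.le _), smul_eq_mul, mul_comm]

theorem integrableOn_stableMeasure_iff {α : ℝ} {f : ℝ → ℝ} :
    IntegrableOn f (Ioi 0) (stableMeasure α) ↔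
      IntegrableOn (fun z ↦ f z * z ^ (-1 - α)) (Ioi 0) := by
  rw [IntegrableOn, stableMeasure, restrict_withDensity measurableSet_Ioi,
    integrable_withDensity_iff (by fun_prop) (.of_forall fun _ ↦ ENNReal.ofReal_lt_top)]
  refine integrableOn_congr_fun (fun z (hz : 0 < z) ↦ ?_) measurableSet_Ioi
  simp only [ENNReal.toReal_ofReal (rpow_nonneg hz.le _)]

theorem sq_mul_rpow_neg_one_sub {z : ℝ} (hz : 0 < z) (α : ℝ) :
    z ^ 2 * z ^ (-1 - α) = z ^ (1 - α) := by
  rw [← rpow_natCast, ← rpow_add hz]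
  congr 1
  push_cast
  ring

theorem isLevyMeasure_stableMeasure {α : ℝ} (hα₀ : 0 < α) (hα₂ : α < 2) :
    IsLevyMeasure (stableMeasure α) := by
  rw [IsLevyMeasure, integrableOn_stableMeasure_iff, ← Ioc_union_Ioi_eq_Ioi zero_le_one]
  refine IntegrableOn.union ?_ ?_
  · have hpow : IntegrableOn (fun z : ℝ ↦ z ^ (1 - α)) (Ioc 0 1) :=
      (intervalIntegrable_iff_integrableOn_Ioc_of_le zero_le_one).1
        (intervalIntegral.intervalIntegrable_rpow' (by linarith))
    refine hpow.congr_fun (fun z hz ↦ ?_) measurableSet_Ioc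
    simp only [min_eq_right (pow_le_one₀ hz.1.le hz.2), sq_mul_rpow_neg_one_sub hz.1]
  · refine (integrableOn_Ioi_rpow_of_lt (by linarith : -1 - α < -1) one_pos).congr_fun
      (fun z (hz : 1 < z) ↦ ?_) measurableSet_Ioi
    simp only [min_eq_left (one_le_pow₀ hz.le), one_mul]

theorem stableIntegral_eq_levyExponent (ρ : ℝ) :
    stableIntegral ρ = levyExponent (stableMeasure 1) ρ := by
  funext l
  rw [levyExponent, setIntegral_stableMeasure]
  norm_num [stableIntegral, compensatedKernel]

theorem integral_sq_mul_exp_neg_mul_stableMeasure {α l : ℝ} (hα : α < 2) (hl : 0 < l) :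
    ∫ z in Ioi 0, z ^ 2 * exp (-(l * z)) ∂stableMeasure α = (1 / l) ^ (2 - α) * Gamma (2 - α) := by
  rw [setIntegral_stableMeasure, ← integral_rpow_mul_exp_neg_mul_Ioi (sub_pos.2 hα) hl]
  refine setIntegral_congr_fun measurableSet_Ioi fun z (hz : 0 < z) ↦ ?_
  have hexponent : 2 - α - 1 = 1 - α := by ring
  simp only [hexponent, ← sq_mul_rpow_neg_one_sub hz]
  ring

/-- Differentiation under the integral: for every `ρ > 0`, the function
`I(λ) = ∫₀^∞ (1 − e^{−λz} − λz·1_{z≤ρ}) z^{−2} dz` is twice differentiable on `(0,∞)`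
and `I''(λ) = −1/λ` there. -/
theorem stableIntegral_second_deriv (ρ : ℝ) (hρ : 0 < ρ) :
    DifferentiableOn ℝ (stableIntegral ρ) (Ioi 0) ∧
    DifferentiableOn ℝ (deriv (stableIntegral ρ)) (Ioi 0) ∧
    ∀ l : ℝ, 0 < l → deriv (deriv (stableIntegral ρ)) l = -1 / l := by
  obtain ⟨hdiff, hdiff', hderiv⟩ := stableIntegral_second_deriv_general
    (isLevyMeasure_stableMeasure one_pos one_lt_two) hρ
  rw [stableIntegral_eq_levyExponent]
  refine ⟨hdiff, hdiff', fun l hl ↦ ?_⟩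
  rw [hderiv l hl, integral_sq_mul_exp_neg_mul_stableMeasure one_lt_two hl]
  norm_num [neg_div]
end
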